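/- arXiv:1706.06470 — 2 statements merged into one kernel-verified Lean document; each statement's English description precedes it below -/
import Mathlib

section
/- Let (a_n) be a sequence in a field K of characteristic zero satisfying a linear recurrence a_n = Σ_{j=1}^d γ_j a_{n-j} for n ≥ d with constant coefficients γ_j ∈ K. Then the zero set { n ∈ ℕ | a_n = 0 } is the union of a finite set and finitely many arithmetic progressions. -/
/-- A set of naturals is SML if it is the union of a finite set and finitely
many one-sided arithmetic progressions `{α + t β | t ∈ ℕ}`. -/
def IsSML (N : Set ℕ) : Prop :=
  ∃ (F : Finset ℕ) (k : ℕ) (α β : Fin k → ℕ),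
    N = (↑F : Set ℕ) ∪ ⋃ i : Fin k, {m : ℕ | ∃ t : ℕ, m = α i + t * β i}

set_option linter.style.haveILetI false

theorem IsSML.of_finite {N : Set ℕ} (h : N.Finite) : IsSML N := by
  refine ⟨h.toFinset, 0, Fin.elim0, Fin.elim0, ?_⟩
  simp

theorem IsSML.univ : IsSML Set.univ := by
  refine ⟨∅, 1, fun _ => 0, fun _ => 1, ?_⟩
  ext n
  simp

theorem IsSML.union {M N : Set ℕ} (hM : IsSML M) (hN : IsSML N) : IsSML (M ∪ N) := by
  obtain ⟨F, k, α, β, rfl⟩ := hM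
  obtain ⟨F', k', α', β', rfl⟩ := hN
  refine ⟨F ∪ F', k + k', Fin.append α α', Fin.append β β', ?_⟩
  ext n
  simp only [Set.mem_union, Set.mem_iUnion, Set.mem_ofPred_eq, Finset.coe_union]
  have key : (∃ i t, n = Fin.append α α' i + t * Fin.append β β' i) ↔
      (∃ i t, n = α i + t * β i) ∨ (∃ i t, n = α' i + t * β' i) := by
    constructor
    · rintro ⟨i, t, h⟩
      induction i using Fin.addCases with
      | left i => exact Or.inl ⟨i, t, by simpa using h⟩
      | right i => exact Or.inr ⟨i, t, by simpa using h⟩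
    · rintro (⟨i, t, h⟩ | ⟨i, t, h⟩)
      · exact ⟨Fin.castAdd _ i, t, by simpa using h⟩
      · exact ⟨Fin.natAdd _ i, t, by simpa using h⟩
  rw [key]
  exact or_or_or_comm

theorem IsSML.affine {M : Set ℕ} (hM : IsSML M) (r N : ℕ) :
    IsSML ((fun t => r + t * N) '' M) := by
  obtain ⟨F, k, α, β, rfl⟩ := hM
  refine ⟨F.image (fun t => r + t * N), k, fun i => r + α i * N, fun i => β i * N, ?_⟩
  rw [Set.image_union, Set.image_iUnion, Finset.coe_image]
  congr 1
  refine Set.iUnion_congr fun i => ?_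
  ext n
  simp only [Set.mem_image, Set.mem_ofPred_eq]
  constructor
  · rintro ⟨_, ⟨t, rfl⟩, rfl⟩
    exact ⟨t, by ring⟩
  · rintro ⟨t, rfl⟩
    exact ⟨_, ⟨t, rfl⟩, by ring⟩

theorem IsSML.biUnion {ι : Type*} (s : Finset ι) (f : ι → Set ℕ) (h : ∀ i ∈ s, IsSML (f i)) :
    IsSML (⋃ i ∈ s, f i) := by
  classical
  induction s using Finset.induction_on with
  | empty => simpa using IsSML.of_finite Set.finite_empty
  | insert a s ha ih =>
    rw [Finset.set_biUnion_insert]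
    exact (h a (by simp)).union (ih fun i hi => h i (by simp [hi]))

/-- A set is SML as soon as its traces on all residue classes modulo `N` are. -/
theorem IsSML.of_residues {Z : Set ℕ} (N : ℕ) (hN : 0 < N)
    (h : ∀ r < N, IsSML {t : ℕ | r + t * N ∈ Z}) : IsSML Z := by
  have key : Z = ⋃ r ∈ Finset.range N, (fun t => r + t * N) '' {t : ℕ | r + t * N ∈ Z} := by
    ext n
    simp only [Set.mem_iUnion, Set.mem_image, Set.mem_ofPred_eq, Finset.mem_range]
    constructor
    · intro hn
      have e : n % N + n / N * N = n := by rw [mul_comm]; exact Nat.mod_add_div n N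
      exact ⟨n % N, Nat.mod_lt _ hN, n / N, by rwa [e], e⟩
    · rintro ⟨r, -, t, ht, rfl⟩
      exact ht
  rw [key]
  exact IsSML.biUnion _ _ fun r hr => (h r (Finset.mem_range.1 hr)).affine r N

theorem sml_norm_coeff (p : ℕ) [Fact p.Prime] (k j : ℕ) :
    ‖((p : ℚ_[p]) ^ (3 * k) / (k.factorial : ℚ_[p])) * (((descPochhammer ℤ k).coeff j : ℤ) : ℚ_[p])‖
      ≤ ((p : ℝ)⁻¹) ^ j * ((p : ℝ)⁻¹) ^ k := by
  have hp1 : (1 : ℝ) < p := by exact_mod_cast (Fact.out : p.Prime).one_lt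
  have hp0 : (0 : ℝ) < p := by linarith
  have hq1 : (p : ℝ)⁻¹ ≤ 1 := inv_le_one_of_one_le₀ hp1.le
  have hq0 : (0 : ℝ) ≤ (p : ℝ)⁻¹ := by positivity
  by_cases hjk : k < j
  · have : (descPochhammer ℤ k).coeff j = 0 := by
      apply Polynomial.coeff_eq_zero_of_natDegree_lt
      rwa [descPochhammer_natDegree]
    rw [this]
    simp
    positivity
  push Not at hjk
  have hv : padicValNat p k.factorial ≤ k := by
    have h1 := sub_one_mul_padicValNat_factorial (p := p) k
    have h2 : 1 ≤ p - 1 := by have := (Fact.out : p.Prime).two_le; omega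
    calc padicValNat p k.factorial ≤ (p - 1) * padicValNat p k.factorial :=
          Nat.le_mul_of_pos_left _ h2
      _ ≤ k := by rw [h1]; omega
  have hf : ‖(k.factorial : ℚ_[p])‖ = ((p : ℝ)⁻¹) ^ (padicValNat p k.factorial) := by
    rw [Padic.norm_eq_zpow_neg_valuation (by exact_mod_cast k.factorial_ne_zero),
      Padic.valuation_natCast]
    simp
  have hfp : ((p : ℝ)⁻¹) ^ k ≤ ‖(k.factorial : ℚ_[p])‖ := by
    rw [hf]; exact pow_le_pow_of_le_one hq0 hq1 hv
  have hpos : 0 < ((p : ℝ)⁻¹) ^ k := by positivity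
  have hc : ‖(((descPochhammer ℤ k).coeff j : ℤ) : ℚ_[p])‖ ≤ 1 := Padic.norm_int_le_one _
  rw [norm_mul, norm_div, norm_pow, Padic.norm_p]
  calc _ ≤ ((p : ℝ)⁻¹) ^ (3 * k) / ‖(k.factorial : ℚ_[p])‖ * 1 := by gcongr
    _ ≤ ((p : ℝ)⁻¹) ^ (3 * k) / ((p : ℝ)⁻¹) ^ k := by rw [mul_one]; gcongr
    _ = ((p : ℝ)⁻¹) ^ k * ((p : ℝ)⁻¹) ^ k := by
        rw [div_eq_iff hpos.ne']; ring
    _ ≤ _ := by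
        gcongr ?_ * _
        exact pow_le_pow_of_le_one hq0 hq1 hjk

/-- The interpolating power series. -/
theorem sml_exists_analytic (p : ℕ) [Fact p.Prime] {V : Type*} [NormedAddCommGroup V]
    [NormedSpace ℚ_[p] V] [CompleteSpace V] (b : ℕ → V) (hb : ∀ k, ‖b k‖ ≤ 1) :
    ∃ g : ℚ_[p] → V, (∀ z, ‖z‖ ≤ 1 → AnalyticAt ℚ_[p] g z) ∧
      ∀ n : ℕ, g n = ∑ k ∈ Finset.range (n + 1), ((n.choose k : ℚ_[p]) * (p : ℚ_[p]) ^ (3 * k)) • b k := by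
  have hp1 : (1 : ℝ) < p := by exact_mod_cast (Fact.out : p.Prime).one_lt
  have hp0 : (0 : ℝ) < p := by linarith
  have hq1 : (p : ℝ)⁻¹ < 1 := inv_lt_one_of_one_lt₀ hp1
  have hq0 : (0 : ℝ) ≤ (p : ℝ)⁻¹ := by positivity
  set q : ℝ := (p : ℝ)⁻¹ with hq
  let e : ℕ → ℕ → ℚ_[p] := fun k j =>
    ((p : ℚ_[p]) ^ (3 * k) / (k.factorial : ℚ_[p])) * (((descPochhammer ℤ k).coeff j : ℤ) : ℚ_[p])
  have he : ∀ k j, ‖e k j • b k‖ ≤ q ^ j * q ^ k := fun k j => by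
    rw [norm_smul]
    calc _ ≤ ‖e k j‖ * 1 := by gcongr; exact hb k
      _ ≤ _ := by rw [mul_one]; exact sml_norm_coeff p k j
  have hsq : Summable fun k : ℕ => q ^ k := summable_geometric_of_lt_one hq0 hq1
  have hsum1 : ∀ j, Summable fun k => e k j • b k := fun j =>
    Summable.of_norm_bounded (hsq.mul_left (q ^ j)) (fun k => he k j)
  let c : ℕ → V := fun j => ∑' k, e k j • b k
  have hc : ∀ j, ‖c j‖ ≤ q ^ j * ∑' k : ℕ, q ^ k := fun j => by
    rw [← tsum_mul_left]
    exact tsum_of_norm_bounded (hsq.mul_left (q ^ j)).hasSum (fun k => he k j)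
  let P : FormalMultilinearSeries ℚ_[p] ℚ_[p] V := fun n =>
    ContinuousMultilinearMap.mkPiRing ℚ_[p] (Fin n) (c n)
  have hrad : ((p : NNReal) : ENNReal) ≤ P.radius := by
    apply P.le_radius_of_bound (∑' k : ℕ, q ^ k)
    intro n
    simp only [P, ContinuousMultilinearMap.norm_mkPiRing]
    have hpn : (0 : ℝ) < (p : ℝ) ^ n := by positivity
    calc ‖c n‖ * (p : ℝ) ^ n ≤ (q ^ n * ∑' k : ℕ, q ^ k) * (p : ℝ) ^ n := by
          gcongr; exact hc n
      _ = ∑' k : ℕ, q ^ k := by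
          rw [hq, inv_pow]; field_simp
  have hP : HasFPowerSeriesOnBall P.sum P 0 P.radius := P.hasFPowerSeriesOnBall
    (lt_of_lt_of_le (by exact_mod_cast (Fact.out : p.Prime).pos) hrad)
  refine ⟨P.sum, fun z hz => hP.analyticAt_of_mem ?_, fun n => ?_⟩
  · rw [Metric.mem_eball, edist_zero_right]
    refine lt_of_lt_of_le ?_ hrad
    rw [enorm_eq_nnnorm]
    have : ‖z‖₊ ≤ 1 := hz
    have h2 : (1 : NNReal) < p := by exact_mod_cast (Fact.out : p.Prime).one_lt
    exact_mod_cast lt_of_le_of_lt this h2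
  · have hn1 : ‖(n : ℚ_[p])‖ ≤ 1 := by simpa using Padic.norm_int_le_one (p := p) (n : ℤ)
    have hS : Summable (Function.uncurry fun j k => ((n : ℚ_[p]) ^ j * e k j) • b k) := by
      refine Summable.of_norm_bounded (hsq.mul_of_nonneg hsq (fun _ => by positivity)
        (fun _ => by positivity)) ?_
      rintro ⟨j, k⟩
      simp only [Function.uncurry, mul_smul]
      rw [norm_smul, norm_pow]
      calc _ ≤ 1 * ‖e k j • b k‖ := by gcongr; exact pow_le_one₀ (norm_nonneg _) hn1
        _ ≤ _ := by rw [one_mul]; exact he k j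
    have h1 : P.sum (n : ℚ_[p]) = ∑' j, ∑' k, ((n : ℚ_[p]) ^ j * e k j) • b k := by
      unfold FormalMultilinearSeries.sum
      refine tsum_congr fun j => ?_
      simp only [P, ContinuousMultilinearMap.mkPiRing_apply, Finset.prod_const, Finset.card_univ,
        Fintype.card_fin, c, mul_smul]
      exact ((hsum1 j).tsum_const_smul _).symm
    rw [h1, ← hS.tsum_comm]
    have h2 : ∀ k, ∑' j, ((n : ℚ_[p]) ^ j * e k j) • b k
        = ((n.choose k : ℚ_[p]) * (p : ℚ_[p]) ^ (3 * k)) • b k := by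
      intro k
      rw [tsum_eq_sum (s := Finset.range (k + 1))]
      · rw [← Finset.sum_smul]
        congr 1
        have h3 : ∑ j ∈ Finset.range (k + 1),
            (((descPochhammer ℤ k).coeff j : ℤ) : ℚ_[p]) * (n : ℚ_[p]) ^ j
            = (n.descFactorial k : ℚ_[p]) := by
          rw [← descPochhammer_eval_eq_descFactorial, ← descPochhammer_map (Int.castRingHom ℚ_[p]),
            Polynomial.eval_map, Polynomial.eval₂_eq_sum_range, descPochhammer_natDegree]
          rfl
        have h4 : (n.descFactorial k : ℚ_[p]) = (k.factorial : ℚ_[p]) * (n.choose k : ℚ_[p]) := by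
          rw [Nat.descFactorial_eq_factorial_mul_choose]; push_cast; rfl
        have h5 : (k.factorial : ℚ_[p]) ≠ 0 := by exact_mod_cast k.factorial_ne_zero
        calc _ = ((p : ℚ_[p]) ^ (3 * k) / (k.factorial : ℚ_[p])) * ∑ j ∈ Finset.range (k + 1),
            (((descPochhammer ℤ k).coeff j : ℤ) : ℚ_[p]) * (n : ℚ_[p]) ^ j := by
              rw [Finset.mul_sum]
              refine Finset.sum_congr rfl fun j _ => ?_
              simp only [e]; ring
          _ = _ := by rw [h3, h4]; field_simp
      · intro j hj
        have : (descPochhammer ℤ k).coeff j = 0 := by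
          apply Polynomial.coeff_eq_zero_of_natDegree_lt
          rw [descPochhammer_natDegree]
          simpa using hj
        simp [e, this]
    simp_rw [h2]
    rw [tsum_eq_sum (s := Finset.range (n + 1))]
    intro k hk
    rw [Nat.choose_eq_zero_of_lt (by simpa using hk)]
    simp

theorem sml_core (p : ℕ) [Fact p.Prime] {V : Type*} [NormedAddCommGroup V]
    [NormedSpace ℚ_[p] V] [CompleteSpace V] (b : ℕ → V) (hb : ∀ k, ‖b k‖ ≤ 1) :
    IsSML {n : ℕ | ∑ k ∈ Finset.range (n + 1),
      ((n.choose k : ℚ_[p]) * (p : ℚ_[p]) ^ (3 * k)) • b k = 0} := by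
  obtain ⟨g, hg, hgn⟩ := sml_exists_analytic p b hb
  simp_rw [← hgn]
  have hloc : ∀ c : ℤ_[p], ∃ U : Set ℤ_[p], IsOpen U ∧ c ∈ U ∧
      ((∀ y ∈ U, g (y : ℚ_[p]) = 0) ∨ (∀ y ∈ U, g (y : ℚ_[p]) = 0 → y = c)) := by
    intro c
    have hcont : Continuous fun y : ℤ_[p] => (y : ℚ_[p]) := continuous_subtype_val
    rcases (hg c c.2).eventually_eq_zero_or_eventually_ne_zero with h | h
    · obtain ⟨U, hU, hUo, hc⟩ := eventually_nhds_iff.1 (hcont.continuousAt.eventually h)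
      exact ⟨U, hUo, hc, Or.inl hU⟩
    · rw [eventually_nhdsWithin_iff] at h
      obtain ⟨U, hU, hUo, hc⟩ := eventually_nhds_iff.1 (hcont.continuousAt.eventually h)
      refine ⟨U, hUo, hc, Or.inr fun y hy h0 => ?_⟩
      by_contra hne
      exact hU y hy (fun h => hne (Subtype.ext h)) h0
  choose U hUo hcU hU using hloc
  obtain ⟨δ, hδ, hball⟩ := lebesgue_number_lemma_of_metric (isCompact_univ (X := ℤ_[p])) hUo
    (fun x _ => Set.mem_iUnion.2 ⟨x, hcU x⟩)
  obtain ⟨m, hm⟩ := PadicInt.exists_pow_neg_lt p hδ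
  refine IsSML.of_residues (p ^ m) (pow_pos (Fact.out : p.Prime).pos m) fun r _ => ?_
  obtain ⟨c, hc⟩ := hball (r : ℤ_[p]) trivial
  have hmem : ∀ t : ℕ, ((r + t * p ^ m : ℕ) : ℤ_[p]) ∈ U c := by
    intro t
    apply hc
    rw [Metric.mem_ball, dist_eq_norm]
    refine lt_of_le_of_lt ?_ hm
    rw [PadicInt.norm_le_pow_iff_mem_span_pow, Ideal.mem_span_singleton]
    exact ⟨t, by push_cast; ring⟩
  have hcast : ∀ n : ℕ, ((n : ℤ_[p]) : ℚ_[p]) = n := fun n => by simp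
  rcases hU c with h | h
  · have : {t : ℕ | r + t * p ^ m ∈ {n : ℕ | g (n : ℚ_[p]) = 0}} = Set.univ := by
      refine Set.eq_univ_of_forall fun t => ?_
      have := h _ (hmem t)
      rw [hcast] at this
      exact this
    rw [this]
    exact IsSML.univ
  · apply IsSML.of_finite
    apply Set.Subsingleton.finite
    intro s hs t ht
    have h1 := h _ (hmem s) (by rw [hcast]; exact hs)
    have h2 := h _ (hmem t) (by rw [hcast]; exact ht)
    have h3 : r + s * p ^ m = r + t * p ^ m := by exact_mod_cast h1.trans h2.symm
    have := pow_pos (Fact.out : p.Prime).pos m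
    exact Nat.eq_of_mul_eq_mul_right this (by omega)

theorem sml_padic (p : ℕ) [Fact p.Prime] {R : Type*} [CommRing R] (s : Finset R)
    (hs : Algebra.adjoin ℤ (s : Set R) = ⊤) (φ : R →+* PadicAlgCl p) (hφ : ∀ y, ‖φ y‖ ≤ 1)
    {d : ℕ} (A : Matrix (Fin d) (Fin d) R) (hA : IsUnit A) (v : Fin d → R) (i : Fin d) :
    IsSML {n : ℕ | φ ((A ^ n).mulVec v i) = 0} := by
  classical
  let F : IntermediateField ℚ_[p] (PadicAlgCl p) :=
    IntermediateField.adjoin ℚ_[p] (φ '' (s : Set R))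
  haveI : FiniteDimensional ℚ_[p] F := by
    haveI : Finite (φ '' (s : Set R)) := (s.finite_toSet.image φ).to_subtype
    exact IntermediateField.finiteDimensional_adjoin
      fun x _ => (Algebra.IsAlgebraic.isAlgebraic (R := ℚ_[p]) x).isIntegral
  have hmem : ∀ y, φ y ∈ F := by
    intro y
    have hy : y ∈ Algebra.adjoin ℤ (s : Set R) := by rw [hs]; trivial
    induction hy using Algebra.adjoin_induction with
    | mem x hx => exact IntermediateField.subset_adjoin _ _ ⟨x, hx, rfl⟩
    | algebraMap r => simp
    | add x y _ _ hx hy => rw [map_add]; exact add_mem hx hy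
    | mul x y _ _ hx hy => rw [map_mul]; exact mul_mem hx hy
  haveI : ProperSpace F := FiniteDimensional.proper ℚ_[p] F
  haveI : CompleteSpace F := FiniteDimensional.complete ℚ_[p] F
  let O : Subring F :=
    { carrier := {x | ‖x‖ ≤ 1}
      mul_mem' := fun {a b} ha hb => by
        simp only [Set.mem_ofPred_eq] at *
        rw [norm_mul]; exact mul_le_one₀ ha (norm_nonneg _) hb
      one_mem' := by simp
      add_mem' := fun {a b} ha hb => by
        have h := PadicAlgCl.isNonarchimedean p (a : PadicAlgCl p) (b : PadicAlgCl p)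
        exact h.trans (max_le ha hb)
      zero_mem' := by simp
      neg_mem' := fun {a} ha => by simpa using ha }
  have hO : ∀ x : O, ‖(x : F)‖ ≤ 1 := fun x => x.2
  haveI : CompactSpace O := by
    have h1 : IsCompact (Metric.closedBall (0 : F) 1) := isCompact_closedBall _ _
    have h2 : (O : Set F) = Metric.closedBall (0 : F) 1 := by
      ext x; simp [O]
    have h3 : IsCompact (O : Set F) := h2 ▸ h1
    exact isCompact_iff_compactSpace.1 h3
  let ψ : R →+* O := (φ.codRestrict F.toSubfield hmem).codRestrict O (fun y => hφ y)
  have hψ : ∀ y, ((ψ y : F) : PadicAlgCl p) = φ y := fun y => rfl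
  have hp0 : (p : F) ≠ 0 := by
    have : (p : PadicAlgCl p) ≠ 0 := by exact_mod_cast (Fact.out : p.Prime).ne_zero
    intro h
    exact this (by simpa using congrArg (algebraMap F (PadicAlgCl p)) h)
  have hnp : ‖(p : F)‖ = (p : ℝ)⁻¹ := by
    have : ‖algebraMap ℚ_[p] F (p : ℚ_[p])‖ = (p : ℝ)⁻¹ := by
      rw [norm_algebraMap', Padic.norm_p]
    simpa using this
  let I : Ideal O := Ideal.span {(p : O) ^ 3}
  haveI : Finite (O ⧸ I) := by
    have hopen : IsOpen (I.toAddSubgroup : Set O) := by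
      apply AddSubgroup.isOpen_of_mem_nhds (g := 0)
      have hc : Continuous fun x : O => ‖(x : F)‖ := continuous_subtype_val.norm
      have : {x : O | ‖(x : F)‖ < ‖(p : F) ^ 3‖} ∈ nhds (0 : O) := by
        apply (isOpen_lt hc continuous_const).mem_nhds
        simp [hp0]
        exact pow_pos (norm_pos_iff.2 hp0) 3
      refine Filter.mem_of_superset this fun x hx => ?_
      have hx' : ‖(x : F)‖ < ‖(p : F) ^ 3‖ := hx
      refine Ideal.mem_span_singleton.2 ⟨⟨(x : F) / (p : F) ^ 3, ?_⟩, ?_⟩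
      · change ‖(x : F) / (p : F) ^ 3‖ ≤ 1
        rw [norm_div]
        exact div_le_one_of_le₀ hx'.le (norm_nonneg _)
      · apply Subtype.ext
        push_cast
        field_simp
    exact AddSubgroup.quotient_finite_of_isOpen I.toAddSubgroup hopen
  let A1 : Matrix (Fin d) (Fin d) O := ψ.mapMatrix A
  have hA1 : IsUnit A1 := hA.map ψ.mapMatrix
  let π : Matrix (Fin d) (Fin d) O →+* Matrix (Fin d) (Fin d) (O ⧸ I) :=
    (Ideal.Quotient.mk I).mapMatrix
  obtain ⟨N, hN, hAN⟩ : ∃ N, 0 < N ∧ (π A1) ^ N = 1 := by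
    obtain ⟨a, ha⟩ := hA1.map π
    obtain ⟨N, hN, h⟩ := (isOfFinOrder_iff_pow_eq_one).1 (isOfFinOrder_of_finite a)
    exact ⟨N, hN, by rw [← ha, ← Units.val_pow_eq_pow_val, h, Units.val_one]⟩
  obtain ⟨B, hB⟩ : ∃ B : Matrix (Fin d) (Fin d) O, A1 ^ N = ((p : O) ^ 3) • B + 1 := by
    have h : ∀ i j, ∃ b : O, (A1 ^ N - 1) i j = (p : O) ^ 3 * b := by
      intro i j
      have h0 : π (A1 ^ N - 1) = 0 := by rw [map_sub, map_pow, hAN, map_one, sub_self]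
      have h1 : (Ideal.Quotient.mk I) ((A1 ^ N - 1) i j) = 0 := congrFun (congrFun h0 i) j
      exact Ideal.mem_span_singleton.1 (Ideal.Quotient.eq_zero_iff_mem.1 h1)
    choose b hb using h
    refine ⟨Matrix.of b, ?_⟩
    rw [← sub_eq_iff_eq_add]
    ext i j
    rw [hb]
    simp
  refine IsSML.of_residues N hN fun r _ => ?_
  let w : Fin d → O := (A1 ^ r).mulVec (ψ ∘ v)
  let b : ℕ → F := fun k => (((B ^ k).mulVec w i : O) : F)
  convert sml_core p b (fun k => hO _) using 1
  ext t
  have e1 : ψ ((A ^ (r + t * N)).mulVec v i) = (((p : O) ^ 3 • B + 1) ^ t).mulVec w i := by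
    rw [← hB, ← pow_mul, Matrix.mulVec_mulVec, ← pow_add, add_comm, mul_comm t N,
      RingHom.map_mulVec]
    congr 2
    exact map_pow ψ.mapMatrix A _
  have e2 : (((p : O) ^ 3 • B + 1) ^ t).mulVec w i
      = ∑ k ∈ Finset.range (t + 1), ((t.choose k : O) * (p : O) ^ (3 * k)) * (B ^ k).mulVec w i := by
    rw [(Commute.one_right _).add_pow, Matrix.sum_mulVec, Finset.sum_apply]
    refine Finset.sum_congr rfl fun k _ => ?_
    rw [one_pow, mul_one, smul_pow, ← pow_mul, (Nat.cast_commute _ _).symm.eq, ← nsmul_eq_mul,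
      Matrix.smul_mulVec, Matrix.smul_mulVec]
    simp [mul_assoc]
  have e3 : (((((p : O) ^ 3 • B + 1) ^ t).mulVec w i : O) : F)
      = ∑ k ∈ Finset.range (t + 1), ((t.choose k : ℚ_[p]) * (p : ℚ_[p]) ^ (3 * k)) • b k := by
    rw [e2]
    push_cast
    refine Finset.sum_congr rfl fun k _ => ?_
    rw [Algebra.smul_def]
    simp [b]
  change φ _ = 0 ↔ _ = 0
  rw [← e3, ← hψ, e1]
  simp

theorem sml_exists_algInd (p : ℕ) [Fact p.Prime] (ι : Type*) [Finite ι] :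
    ∀ c : ι → ℤ, ∃ t : ι → ℤ_[p], AlgebraicIndependent ℤ t ∧ ∀ i, PadicInt.toZMod (t i) = c i := by
  induction ι using Finite.induction_empty_option with
  | of_equiv e ih =>
    intro c
    obtain ⟨t, ht, h⟩ := ih (c ∘ e)
    refine ⟨t ∘ e.symm, ht.comp _ e.symm.injective, fun i => ?_⟩
    simpa using h (e.symm i)
  | h_empty =>
    intro c
    refine ⟨PEmpty.elim, ?_, fun i => i.elim⟩
    rw [algebraicIndependent_empty_type_iff]
    exact (algebraMap ℤ ℤ_[p]).injective_int
  | h_option ih =>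
    rename_i α _
    intro c
    obtain ⟨t, ht, h⟩ := ih (c ∘ some)
    haveI : Countable (MvPolynomial α ℤ) := by
      rw [← Cardinal.mk_le_aleph0_iff]
      refine (MvPolynomial.cardinalMk_le_max_lift (σ := α) (R := ℤ)).trans ?_
      simp
    haveI : Countable (Algebra.adjoin ℤ (Set.range t)) :=
      ht.aevalEquiv.symm.injective.countable
    have hcount := Algebraic.countable (Algebra.adjoin ℤ (Set.range t)) ℤ_[p]
    obtain ⟨a, ha, hac⟩ : ∃ a : ℤ_[p], ¬ IsAlgebraic (Algebra.adjoin ℤ (Set.range t)) a ∧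
        PadicInt.toZMod a = c none := by
      have h1 := (hcount.image (fun x : ℤ_[p] => (x : ℚ_[p]))).dense_compl ℚ_[p]
      obtain ⟨x, hx, hxm⟩ := h1.exists_dist_lt (c none : ℚ_[p]) one_pos
      have hx1 : ‖x‖ ≤ 1 := by
        have e : x = (c none : ℚ_[p]) + -((c none : ℚ_[p]) - x) := by ring
        rw [e]
        refine (Padic.nonarchimedean _ _).trans (max_le (Padic.norm_int_le_one _) ?_)
        rw [norm_neg, ← dist_eq_norm]; exact hxm.le
      obtain ⟨z, rfl⟩ : ∃ z : ℤ_[p], (z : ℚ_[p]) = x := ⟨⟨x, hx1⟩, rfl⟩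
      refine ⟨z, fun hal => hx ⟨_, hal, rfl⟩, ?_⟩
      rw [← sub_eq_zero, ← map_intCast (PadicInt.toZMod (p := p)), ← map_sub, ← RingHom.mem_ker,
        PadicInt.ker_toZMod, IsLocalRing.mem_maximalIdeal, PadicInt.mem_nonunits,
        PadicInt.norm_def]
      rw [dist_comm, dist_eq_norm] at hxm
      simpa using hxm
    refine ⟨fun o => o.elim a t, (ht.option_iff_transcendental a).2 ha, fun o => ?_⟩
    cases o with
    | none => exact hac
    | some i => exact h i

theorem sml_norm_le_one_of_integral (p : ℕ) [Fact p.Prime] (x : PadicAlgCl p)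
    (hx : IsIntegral ℤ_[p] x) : ‖x‖ ≤ 1 := by
  rw [← PadicAlgCl.spectralNorm_eq]
  unfold spectralNorm
  rw [spectralValue_le_one_iff (minpoly.monic
    (Algebra.IsAlgebraic.isAlgebraic (R := ℚ_[p]) x).isIntegral),
    minpoly.isIntegrallyClosed_eq_field_fractions' ℚ_[p] hx]
  intro n
  rw [Polynomial.coeff_map]
  exact ((minpoly ℤ_[p] x).coeff n).2

theorem sml_embedding {R : Type*} [CommRing R] [IsDomain R] [CharZero R] (s : Finset R)
    (hs : Algebra.adjoin ℤ (s : Set R) = ⊤) :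
    ∃ (p : ℕ) (_ : Fact p.Prime) (φ : R →+* PadicAlgCl p),
      Function.Injective φ ∧ ∀ y, ‖φ y‖ ≤ 1 := by
  classical
  haveI : FaithfulSMul ℤ R := (faithfulSMul_iff_algebraMap_injective ℤ R).2
    (algebraMap ℤ R).injective_int
  haveI : Algebra.IsAlgebraic (Algebra.adjoin ℤ (s : Set R)) R := by
    refine ⟨fun x => ?_⟩
    have : x ∈ Algebra.adjoin ℤ (s : Set R) := by rw [hs]; trivial
    exact isAlgebraic_algebraMap (⟨x, this⟩ : Algebra.adjoin ℤ (s : Set R))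
  obtain ⟨T, hTs, hT⟩ := exists_isTranscendenceBasis_subset (R := ℤ) (s : Set R)
  haveI : Finite T := s.finite_toSet.subset hTs
  let x : T → R := Subtype.val
  have hx : AlgebraicIndependent ℤ x := hT.1
  let B := Algebra.adjoin ℤ (Set.range x)
  haveI : Algebra.IsAlgebraic B R := hT.isAlgebraic
  have hint : ∀ y : R, ∃ b : B, b ≠ 0 ∧ IsIntegral B (b • y) := fun y => by
    obtain ⟨b, hb, h⟩ := (Algebra.IsAlgebraic.isAlgebraic (R := B) y).exists_integral_multiple
    exact ⟨b, hb, h⟩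
  choose D hD0 hD using hint
  let Q : MvPolynomial T ℤ := hx.aevalEquiv.symm (∏ y ∈ s, D y)
  have hQ : Q ≠ 0 := by
    simp only [Q, ne_eq, EmbeddingLike.map_eq_zero_iff]
    exact Finset.prod_ne_zero_iff.2 fun y _ => hD0 y
  obtain ⟨c, hc⟩ : ∃ c : T → ℤ, MvPolynomial.eval c Q ≠ 0 := by
    by_contra! h
    exact hQ (MvPolynomial.funext fun c => by rw [h c, map_zero])
  obtain ⟨p, hpgt, hp⟩ := Nat.exists_infinite_primes ((MvPolynomial.eval c Q).natAbs + 1)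
  haveI : Fact p.Prime := ⟨hp⟩
  have hpd : ¬ (p : ℤ) ∣ MvPolynomial.eval c Q := by
    intro h
    have := Nat.le_of_dvd (Int.natAbs_pos.2 hc) (Int.natCast_dvd.1 h)
    omega
  obtain ⟨t, ht, htc⟩ := sml_exists_algInd p T c
  let h0 : B →+* ℤ_[p] :=
    ((MvPolynomial.aeval t : MvPolynomial T ℤ →ₐ[ℤ] ℤ_[p]) : MvPolynomial T ℤ →+* ℤ_[p]).comp
      (hx.aevalEquiv.symm : B →+* MvPolynomial T ℤ)
  have h0inj : Function.Injective h0 := by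
    have h1 : Function.Injective (MvPolynomial.aeval t : MvPolynomial T ℤ →ₐ[ℤ] ℤ_[p]) := ht
    exact h1.comp hx.aevalEquiv.symm.injective
  have hres : ∀ b : B, PadicInt.toZMod (h0 b)
      = ((MvPolynomial.eval c (hx.aevalEquiv.symm b) : ℤ) : ZMod p) := by
    intro b
    have : (PadicInt.toZMod (p := p)).comp
        ((MvPolynomial.aeval t : MvPolynomial T ℤ →ₐ[ℤ] ℤ_[p]) : MvPolynomial T ℤ →+* ℤ_[p])
        = (Int.castRingHom (ZMod p)).comp (MvPolynomial.eval c) := by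
      apply MvPolynomial.ringHom_ext
      · intro r; simp
      · intro i; simp [htc]
    exact congrArg (fun f => f (hx.aevalEquiv.symm b)) this
  have hunit : ∀ y ∈ s, ‖h0 (D y)‖ = 1 := by
    intro y hy
    by_contra hne
    have hlt : ‖h0 (D y)‖ < 1 := lt_of_le_of_ne (PadicInt.norm_le_one _) hne
    have h1 : PadicInt.toZMod (h0 (D y)) = 0 := by
      rw [← RingHom.mem_ker, PadicInt.ker_toZMod, IsLocalRing.mem_maximalIdeal,
        PadicInt.mem_nonunits]
      exact hlt
    rw [hres, ZMod.intCast_zmod_eq_zero_iff_dvd] at h1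
    apply hpd
    refine h1.trans ?_
    exact map_dvd (MvPolynomial.eval c) (map_dvd hx.aevalEquiv.symm (Finset.dvd_prod_of_mem D hy))
  letI : Algebra B (PadicAlgCl p) := ((algebraMap ℤ_[p] (PadicAlgCl p)).comp h0).toAlgebra
  have halg : ∀ b : B, algebraMap B (PadicAlgCl p) b = algebraMap ℤ_[p] (PadicAlgCl p) (h0 b) :=
    fun b => rfl
  have hinjZ : Function.Injective (algebraMap ℤ_[p] (PadicAlgCl p)) := by
    rw [IsScalarTower.algebraMap_eq ℤ_[p] ℚ_[p] (PadicAlgCl p)]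
    exact (algebraMap ℚ_[p] (PadicAlgCl p)).injective.comp (IsFractionRing.injective ℤ_[p] ℚ_[p])
  have hinjB : Function.Injective (algebraMap B (PadicAlgCl p)) := hinjZ.comp h0inj
  haveI : FaithfulSMul B (PadicAlgCl p) := (faithfulSMul_iff_algebraMap_injective _ _).2 hinjB
  haveI : Module.IsTorsionFree B (PadicAlgCl p) := inferInstance
  haveI : Module.IsTorsionFree B R := inferInstance
  let φ : R →ₐ[B] PadicAlgCl p := IsAlgClosed.lift
  have hnormZ : ∀ z : ℤ_[p], ‖algebraMap ℤ_[p] (PadicAlgCl p) z‖ = ‖z‖ := by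
    intro z
    rw [IsScalarTower.algebraMap_apply ℤ_[p] ℚ_[p] (PadicAlgCl p), norm_algebraMap']
    rfl
  have hφs : ∀ y ∈ s, ‖φ y‖ ≤ 1 := by
    intro y hy
    have h1 : IsIntegral ℤ_[p] (φ (D y • y)) :=
      IsIntegral.map_of_comp_eq h0 (φ : R →+* PadicAlgCl p) (by
        ext b
        exact (φ.commutes b).symm) (hD y)
    have h2 := sml_norm_le_one_of_integral p _ h1
    rw [map_smul, Algebra.smul_def, norm_mul, halg, hnormZ, hunit y hy, one_mul] at h2
    exact h2
  refine ⟨p, inferInstance, φ, ?_, fun y => ?_⟩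
  · rw [injective_iff_map_eq_zero]
    intro y hy
    by_contra hne
    obtain ⟨b, hb, hdvd⟩ := (Algebra.IsAlgebraic.isAlgebraic (R := B) y).exists_nonzero_dvd
      (mem_nonZeroDivisors_of_ne_zero hne)
    have h1 : (φ : R →+* PadicAlgCl p) y ∣ φ (algebraMap B R b) :=
      map_dvd (φ : R →+* PadicAlgCl p) hdvd
    rw [hy, zero_dvd_iff, φ.commutes] at h1
    exact hb (hinjB (by rw [h1, map_zero]))
  · have hy : y ∈ Algebra.adjoin ℤ (s : Set R) := by rw [hs]; trivial
    induction hy using Algebra.adjoin_induction with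
    | mem x hx => exact hφs x hx
    | algebraMap r =>
      have := hnormZ (r : ℤ_[p])
      simp only [map_intCast] at this
      simp only [algebraMap_int_eq, eq_intCast, map_intCast]
      rw [this]; exact PadicInt.norm_le_one _
    | add x y _ _ hx hy =>
      rw [map_add]
      exact (PadicAlgCl.isNonarchimedean p _ _).trans (max_le hx hy)
    | mul x y _ _ hx hy =>
      rw [map_mul, norm_mul]; exact mul_le_one₀ hx (norm_nonneg _) hy

theorem sml_matrix {K : Type*} [Field K] [CharZero K] {d : ℕ} (A : Matrix (Fin d) (Fin d) K)
    (hA : IsUnit A) (v : Fin d → K) (i : Fin d) :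
    IsSML {n : ℕ | (A ^ n).mulVec v i = 0} := by
  classical
  obtain ⟨A', h1, h2⟩ := isUnit_iff_exists.1 hA
  let S : Finset K := (Finset.univ.image fun q : Fin d × Fin d => A q.1 q.2) ∪
    (Finset.univ.image fun q : Fin d × Fin d => A' q.1 q.2) ∪ Finset.univ.image v
  let R := Algebra.adjoin ℤ (S : Set K)
  have hAS : ∀ i j, A i j ∈ R := fun i j => Algebra.subset_adjoin <| by
    simp only [S, Finset.coe_union, Finset.coe_image]
    exact Or.inl (Or.inl ⟨(i, j), by simp, rfl⟩)
  have hAS' : ∀ i j, A' i j ∈ R := fun i j => Algebra.subset_adjoin <| by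
    simp only [S, Finset.coe_union, Finset.coe_image]
    exact Or.inl (Or.inr ⟨(i, j), by simp, rfl⟩)
  have hvS : ∀ i, v i ∈ R := fun i => Algebra.subset_adjoin <| by
    simp only [S, Finset.coe_union, Finset.coe_image]
    exact Or.inr ⟨i, by simp, rfl⟩
  let s : Finset R := (S.finite_toSet.preimage (f := ((↑) : R → K))
    Subtype.val_injective.injOn).toFinset
  have hs : Algebra.adjoin ℤ (s : Set R) = ⊤ := by
    simp only [s, Set.Finite.coe_toFinset]
    exact Algebra.adjoin_adjoin_coe_preimage
  let ι : R →+* K := R.val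
  have hι : Function.Injective ι := Subtype.val_injective
  have hιM : Function.Injective (ι.mapMatrix : Matrix (Fin d) (Fin d) R →+* _) := by
    intro X Y h
    ext i j
    exact congrFun (congrFun h i) j
  let A1 : Matrix (Fin d) (Fin d) R := Matrix.of fun i j => ⟨A i j, hAS i j⟩
  let A1' : Matrix (Fin d) (Fin d) R := Matrix.of fun i j => ⟨A' i j, hAS' i j⟩
  have e1 : ι.mapMatrix A1 = A := rfl
  have e2 : ι.mapMatrix A1' = A' := rfl
  have hA1 : IsUnit A1 := isUnit_iff_exists.2 ⟨A1', hιM (by rw [map_mul, e1, e2, h1, map_one]),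
    hιM (by rw [map_mul, e1, e2, h2, map_one])⟩
  let w : Fin d → R := fun i => ⟨v i, hvS i⟩
  obtain ⟨p, hp, φ, hφ, hn⟩ := sml_embedding s hs
  have key := sml_padic p s hs φ hn A1 hA1 w i
  convert key using 3 with n
  rw [map_eq_zero_iff φ hφ, ← map_eq_zero_iff ι hι, RingHom.map_mulVec]
  have e3 : (A1 ^ n).map ι = A ^ n := (map_pow ι.mapMatrix A1 n).trans (by rw [e1])
  rw [e3]
  rfl

theorem sml_aux {K : Type*} [Field K] [CharZero K] (d : ℕ) : ∀ (γ : Fin d → K) (a : ℕ → K)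
    (_ : ∀ n : ℕ, a (n + d) = ∑ j : Fin d, γ j * a (n + d - 1 - j)),
    IsSML {n : ℕ | a n = 0} := by
  induction d with
  | zero =>
    intro γ a h
    have : {n : ℕ | a n = 0} = Set.univ := Set.eq_univ_of_forall fun n => by simpa using h n
    rw [this]
    exact IsSML.univ
  | succ d ih =>
    intro γ a h
    by_cases hγ : γ (Fin.last d) = 0
    · have h1 := ih (fun j => γ j.castSucc) (fun n => a (n + 1)) (fun n => by
        have := h n
        rw [Fin.sum_univ_castSucc, hγ, zero_mul, add_zero] at this
        rw [add_assoc, this]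
        refine Finset.sum_congr rfl fun j _ => ?_
        congr 2
        have := j.2
        simp only [Fin.val_castSucc]
        omega)
      have h2 := (h1.affine 1 1).union (IsSML.of_finite ((Set.finite_singleton 0).inter_of_left
        {n : ℕ | a n = 0}))
      convert h2 using 1
      ext n
      cases n with
      | zero => simp
      | succ n => simp [add_comm 1]
    · let T : (Fin (d + 1) → K) →ₗ[K] (Fin (d + 1) → K) :=
        { toFun := fun w => Fin.snoc (fun i : Fin d => w i.succ) (∑ j, γ j * w j.rev)
          map_add' := fun x y => by
            ext i
            induction i using Fin.lastCases with
            | last => simp [mul_add, Finset.sum_add_distrib]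
            | cast i => simp
          map_smul' := fun r x => by
            ext i
            induction i using Fin.lastCases with
            | last => simp [Finset.mul_sum, mul_left_comm]
            | cast i => simp }
      have hTs : ∀ w (i : Fin d), T w i.castSucc = w i.succ := fun w i => by simp [T]
      have hTl : ∀ w, T w (Fin.last d) = ∑ j, γ j * w j.rev := fun w => by simp [T]
      have hker : LinearMap.ker T = ⊥ := by
        rw [LinearMap.ker_eq_bot']
        intro w hw
        have hw1 : ∀ i : Fin d, w i.succ = 0 := fun i => by rw [← hTs w i, hw]; rfl
        have hw0 : w 0 = 0 := by
          have := hTl w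
          rw [hw, Finset.sum_eq_single (Fin.last d)] at this
          · simpa [hγ] using this
          · intro j _ hj
            obtain ⟨k, hk⟩ := Fin.exists_succ_eq.2 (show j.rev ≠ 0 by
              intro h0
              apply hj
              rw [← Fin.rev_rev j, h0, Fin.rev_zero])
            rw [← hk, hw1, mul_zero]
          · simp
        ext i
        induction i using Fin.cases with
        | zero => exact hw0
        | succ i => exact hw1 i
      have hunit : IsUnit T := (LinearMap.isUnit_iff_ker_eq_bot T).2 hker
      have hA : IsUnit (LinearMap.toMatrix' T) := hunit.map (LinearMap.toMatrixAlgEquiv' (R := K))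
      have hst : ∀ n, (LinearMap.toMatrix' T ^ n).mulVec (fun i : Fin (d + 1) => a i)
          = fun i : Fin (d + 1) => a (n + i) := by
        intro n
        induction n with
        | zero => simp
        | succ n ihn =>
          rw [pow_succ', ← Matrix.mulVec_mulVec, ihn, LinearMap.toMatrix'_mulVec]
          ext i
          induction i using Fin.lastCases with
          | last =>
            rw [hTl, Fin.val_last, add_right_comm, add_assoc, h]
            refine Finset.sum_congr rfl fun j _ => ?_
            congr 2
            have := j.2
            rw [Fin.val_rev]
            omega
          | cast i =>
            rw [hTs]
            congr 1
            simp only [Fin.val_succ, Fin.val_castSucc]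
            omega
      convert sml_matrix _ hA (fun i : Fin (d + 1) => a i) 0 using 3 with n
      rw [hst]
      simp

/-- Skolem–Mahler–Lech theorem. -/
theorem skolem_mahler_lech {K : Type*} [Field K] [CharZero K]
    (d : ℕ) (hd : 1 ≤ d) (γ : Fin d → K) (a : ℕ → K)
    (hrec : ∀ n : ℕ, a (n + d) = ∑ j : Fin d, γ j * a (n + d - 1 - j)) :
    IsSML {n : ℕ | a n = 0} := by
  exact sml_aux d γ a hrec
end

section
/- Let (a_n) be a linearly recurrent sequence over a field K of characteristic zero, and define c_n = 1 if a_n = 0 and c_n = 0 otherwise. Then the sequence (c_n) is eventually periodic. -/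
open scoped Classical
namespace SML
open Polynomial

/-- Tail bounds pass to the quotient by a linear factor. -/
lemma tail_div {p : ℕ} [Fact p.Prime] (P Q : ℚ_[p][X]) (a : ℕ) (s : ℕ) (ε : ℝ) (hε : 0 ≤ ε)
    (hPQ : P = (X - C (a : ℚ_[p])) * Q) (hP : ∀ j, s + 1 ≤ j → ‖P.coeff j‖ ≤ ε) :
    ∀ j, s ≤ j → ‖Q.coeff j‖ ≤ ε := by
  have hco : ∀ j, Q.coeff j = P.coeff (j + 1) + a * Q.coeff (j + 1) := by
    intro j
    rw [hPQ, sub_mul, coeff_sub, coeff_X_mul, coeff_C_mul]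
    ring
  have key : ∀ i j, s ≤ j → Q.natDegree < j + i → ‖Q.coeff j‖ ≤ ε := by
    intro i
    induction i with
    | zero =>
      intro j _ h
      rw [coeff_eq_zero_of_natDegree_lt (by simpa using h)]
      simpa using hε
    | succ i ih =>
      intro j hj h
      rw [hco j]
      refine (Padic.nonarchimedean _ _).trans (max_le (hP _ (by omega)) ?_)
      rw [norm_mul]
      have h1 : ‖(a : ℚ_[p])‖ ≤ 1 := by
        simpa using Padic.norm_int_le_one (p := p) (a : ℤ)
      have h2 := ih (j + 1) (by omega) (by omega)
      calc _ ≤ 1 * ε := mul_le_mul h1 h2 (norm_nonneg _) zero_le_one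
        _ = ε := one_mul _
  intro j hj
  exact key (Q.natDegree + 1) j hj (by omega)

lemma norm_nat_le {p : ℕ} [Fact p.Prime] (a : ℕ) : ‖(a : ℚ_[p])‖ ≤ 1 := by
  simpa using Padic.norm_int_le_one (p := p) (a : ℤ)

lemma eval_bound {p : ℕ} [Fact p.Prime] (ε : ℝ) (hε : 0 ≤ ε) (Z : Finset ℕ) :
    ∀ (P : ℚ_[p][X]), (∀ n ∈ Z, P.eval (n : ℚ_[p]) = 0) →
      (∀ j, Z.card ≤ j → ‖P.coeff j‖ ≤ ε) → ∀ m : ℕ, ‖P.eval (m : ℚ_[p])‖ ≤ ε := by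
  induction Z using Finset.induction_on with
  | empty =>
    intro P _ h m
    rw [eval_eq_sum_range]
    refine IsUltrametricDist.norm_sum_le_of_forall_le_of_nonneg hε fun i _ => ?_
    rw [norm_mul, norm_pow]
    calc _ ≤ ε * 1 := mul_le_mul (h i (by simp)) (pow_le_one₀ (norm_nonneg _) (norm_nat_le m))
            (by positivity) hε
      _ = ε := mul_one _
  | insert a Z ha ih =>
    intro P h0 h m
    obtain ⟨Q, hQ⟩ := dvd_iff_isRoot.mpr (h0 a (by simp))
    have hb := tail_div P Q a Z.card ε hε hQ (by
      intro j hj; exact h j (by rw [Finset.card_insert_of_notMem ha]; exact hj))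
    have := ih Q (by
      intro n hn
      have h1 := h0 n (by simp [hn])
      rw [hQ, eval_mul] at h1
      rcases mul_eq_zero.mp h1 with h2 | h2
      · simp only [eval_sub, eval_X, eval_C, sub_eq_zero, Nat.cast_inj] at h2
        exact absurd (h2 ▸ hn) ha
      · exact h2) hb m
    rw [hQ, eval_mul, norm_mul]
    have h1 : ‖eval (m : ℚ_[p]) (X - C (a : ℚ_[p]))‖ ≤ 1 := by
      simpa using Padic.norm_int_le_one (p := p) ((m : ℤ) - a)
    calc _ ≤ 1 * ε := mul_le_mul h1 this (norm_nonneg _) zero_le_one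
      _ = ε := one_mul _

lemma norm_pow_div_factorial {p : ℕ} [hp : Fact p.Prime] (h3 : 3 ≤ p) (s k : ℕ) (h : 2 * s ≤ k) :
    ‖(p : ℚ_[p]) ^ k / (k.factorial : ℚ_[p])‖ ≤ (2⁻¹ : ℝ) ^ s := by
  have hv : 2 * padicValNat p k.factorial ≤ k := by
    have h1 := sub_one_mul_padicValNat_factorial (p := p) k
    have h2 : 2 * padicValNat p k.factorial ≤ (p - 1) * padicValNat p k.factorial :=
      Nat.mul_le_mul_right _ (by omega)
    omega
  have hp0 : (0 : ℝ) < p := by exact_mod_cast hp.out.pos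
  rw [norm_div, norm_pow, Padic.norm_p]
  have hf : ‖(k.factorial : ℚ_[p])‖ = ((p : ℝ)⁻¹) ^ (padicValNat p k.factorial) := by
    rw [Padic.norm_eq_zpow_neg_valuation (by exact_mod_cast k.factorial_ne_zero),
      Padic.valuation_natCast]
    simp
  rw [hf]
  obtain ⟨t, ht⟩ : ∃ t, k = t + padicValNat p k.factorial := ⟨k - padicValNat p k.factorial, by omega⟩
  have hst : s ≤ t := by omega
  generalize padicValNat p k.factorial = v at *
  rw [ht, pow_add, mul_div_assoc, div_self (by positivity), mul_one]
  have hle : (p : ℝ)⁻¹ ≤ 2⁻¹ := by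
    apply inv_anti₀ (by norm_num)
    exact_mod_cast (by omega : 2 ≤ p)
  calc ((p : ℝ)⁻¹) ^ t ≤ 2⁻¹ ^ t := pow_le_pow_left₀ (by positivity) hle t
    _ ≤ 2⁻¹ ^ s := pow_le_pow_of_le_one (by norm_num) (by norm_num) hst

/-- Hansel's lemma. -/
lemma hansel {p : ℕ} [hp : Fact p.Prime] (h3 : 3 ≤ p) (h f : ℕ → ℤ)
    (hf : ∀ n, f n = ∑ k ∈ Finset.range (n + 1), (n.choose k : ℤ) * ((p : ℤ) ^ k * h k))
    (hinf : {n | f n = 0}.Infinite) (m : ℕ) : f m = 0 := by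
  suffices hs : ∀ s : ℕ, ‖((f m : ℤ) : ℚ_[p])‖ ≤ (2⁻¹ : ℝ) ^ s by
    have h0 : ‖((f m : ℤ) : ℚ_[p])‖ ≤ 0 :=
      ge_of_tendsto' (tendsto_pow_atTop_nhds_zero_of_lt_one (by norm_num) (by norm_num)) hs
    simpa using h0
  intro s
  obtain ⟨Z, hZ, hcard⟩ := hinf.exists_subset_card_eq (2 * s)
  set N := Z.sup id + m with hN
  let P : ℚ_[p][X] := ∑ k ∈ Finset.range (N + 1),
    C ((p : ℚ_[p]) ^ k / (k.factorial : ℚ_[p]) * (h k : ℚ_[p])) * (descPochhammer ℤ k).map (Int.castRingHom _)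
  have hPev : ∀ n, n ≤ N → P.eval (n : ℚ_[p]) = (f n : ℚ_[p]) := by
    intro n hn
    rw [hf, eval_finsetSum]
    have hsub : Finset.range (n + 1) ⊆ Finset.range (N + 1) := by
      intro x; simp only [Finset.mem_range]; omega
    push_cast
    rw [← Finset.sum_subset hsub]
    · refine Finset.sum_congr rfl fun k _ => ?_
      rw [eval_mul, eval_C, descPochhammer_map, descPochhammer_eval_eq_descFactorial,
        Nat.descFactorial_eq_factorial_mul_choose]
      have : (k.factorial : ℚ_[p]) ≠ 0 := by exact_mod_cast k.factorial_ne_zero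
      push_cast
      field_simp
    · intro k _ hk
      rw [eval_mul, eval_C, descPochhammer_map, descPochhammer_eval_eq_descFactorial,
        Nat.descFactorial_of_lt (by simpa using hk)]
      simp
  rw [← hPev m (by omega)]
  apply eval_bound _ (by positivity) Z
  · intro n hn
    have : n ≤ Z.sup id := Finset.le_sup (f := id) hn
    rw [hPev n (by omega)]
    have h0 : f n = 0 := hZ hn
    simp [h0]
  · intro j hj
    rw [finsetSum_coeff]
    refine IsUltrametricDist.norm_sum_le_of_forall_le_of_nonneg (by positivity) fun k _ => ?_
    rw [coeff_C_mul, coeff_map]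
    by_cases hk : k < j
    · rw [coeff_eq_zero_of_natDegree_lt (by rw [descPochhammer_natDegree]; exact hk)]
      simp
    · rw [norm_mul, norm_mul]
      have h1 := norm_pow_div_factorial h3 s k (by omega)
      have h2 := Padic.norm_int_le_one (p := p) (h k)
      have h4 := Padic.norm_int_le_one (p := p) ((descPochhammer ℤ k).coeff j)
      rw [eq_intCast]
      calc _ ≤ (2⁻¹ : ℝ) ^ s * 1 * 1 := by gcongr
        _ = _ := by ring

/-- The shift operator on sequences. -/
noncomputable def sh (R M : Type*) [CommRing R] [AddCommGroup M] [Module R M] :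
    Module.End R (ℕ → M) := LinearMap.funLeft R M Nat.succ

lemma sh_pow {R M : Type*} [CommRing R] [AddCommGroup M] [Module R M] (i : ℕ) (u : ℕ → M) (n : ℕ) :
    ((sh R M) ^ i) u n = u (n + i) := by
  induction i generalizing u with
  | zero => simp
  | succ i ih =>
    rw [pow_succ, Module.End.mul_apply, ih]
    rfl

lemma sh_aeval {R M : Type*} [CommRing R] [AddCommGroup M] [Module R M] (P : R[X]) (u : ℕ → M)
    (n : ℕ) : aeval (sh R M) P u n = ∑ i ∈ Finset.range (P.natDegree + 1), P.coeff i • u (n + i) := by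
  rw [aeval_eq_sum_range, LinearMap.sum_apply, Finset.sum_apply]
  simp [sh_pow]

/-- The finite-order step: `X` has finite order modulo a monic polynomial over `ZMod p`. -/
lemma exists_order {p : ℕ} [Fact p.Prime] (Q : (ZMod p)[X]) (hQ : Q.Monic) (h0 : Q.coeff 0 ≠ 0) :
    ∃ r, 1 ≤ r ∧ Q ∣ X ^ r - 1 := by
  have := hQ.finite_adjoinRoot
  have : Finite (AdjoinRoot Q) := Module.finite_of_finite (ZMod p)
  have hu : IsUnit (AdjoinRoot.root Q) := by
    have h1 : AdjoinRoot.mk Q (X * Q.divX + C (Q.coeff 0)) = 0 := by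
      rw [X_mul_divX_add]; exact AdjoinRoot.mk_self
    rw [map_add, map_mul, AdjoinRoot.mk_X, AdjoinRoot.mk_C] at h1
    have h2 : IsUnit (AdjoinRoot.root Q * AdjoinRoot.mk Q Q.divX) := by
      rw [eq_neg_of_add_eq_zero_left h1, IsUnit.neg_iff]
      exact (IsUnit.mk0 _ h0).map _
    exact isUnit_of_mul_isUnit_left h2
  obtain ⟨u, hu⟩ := hu
  obtain ⟨r, hr, h⟩ := isOfFinOrder_iff_pow_eq_one.mp (isOfFinOrder_of_finite u)
  refine ⟨r, hr, ?_⟩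
  rw [← AdjoinRoot.mk_eq_zero, map_sub, map_pow, AdjoinRoot.mk_X, map_one, ← hu, ← Units.val_pow_eq_pow_val, h]
  simp

/-- The integer case. -/
lemma int_case {p : ℕ} [Fact p.Prime] (h3 : 3 ≤ p) (Q : ℤ[X]) (r : ℕ)
    (hr : Q.map (Int.castRingHom (ZMod p)) ∣ X ^ r - 1) (z : ℕ → ℤ)
    (hz : aeval (sh ℤ ℤ) Q z = 0) (j : ℕ) (hinf : {n | z (r * n + j) = 0}.Infinite) (n : ℕ) :
    z (r * n + j) = 0 := by
  obtain ⟨G, hG⟩ := hr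
  obtain ⟨G, rfl⟩ := map_surjective _ (ZMod.ringHom_surjective (Int.castRingHom (ZMod p))) G
  have hd : C (p : ℤ) ∣ (X ^ r - 1 - Q * G) := by
    rw [C_dvd_iff_dvd_coeff]
    intro i
    rw [← ZMod.intCast_zmod_eq_zero_iff_dvd, ← eq_intCast (Int.castRingHom (ZMod p)), ← coeff_map]
    simp [hG]
  obtain ⟨H, hH⟩ := hd
  have hX : (X : ℤ[X]) ^ r = C (p : ℤ) * H + 1 + G * Q := by rw [← hH]; ring
  have hpow : ∀ n, (X : ℤ[X]) ^ (r * n) = ∑ k ∈ Finset.range (n + 1),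
      (n.choose k : ℤ[X]) * (C ((p : ℤ) ^ k) * H ^ k)
        + ((X : ℤ[X]) ^ (r * n) - (C (p : ℤ) * H + 1) ^ n) := by
    intro n
    rw [add_pow]
    simp only [mul_pow, one_pow, mul_one, C_pow]
    rw [Finset.sum_congr rfl (fun k _ => mul_comm _ _)]
    ring
  have hdv : ∀ n, Q ∣ ((X : ℤ[X]) ^ (r * n) - (C (p : ℤ) * H + 1) ^ n) := by
    intro n
    rw [pow_mul]
    refine dvd_trans ?_ (sub_dvd_pow_sub_pow _ _ n)
    rw [hX]; exact ⟨G, by ring⟩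
  refine hansel h3 (fun k => aeval (sh ℤ ℤ) (H ^ k) z j) (fun n => z (r * n + j)) ?_ hinf n
  intro n
  obtain ⟨T, hT⟩ := hdv n
  have h1 : aeval (sh ℤ ℤ) ((X : ℤ[X]) ^ (r * n)) z j = z (r * n + j) := by
    rw [map_pow, aeval_X, sh_pow, add_comm]
  show z (r * n + j) = _
  rw [← h1, hpow n, hT, mul_comm Q T]
  simp only [map_add, map_sum, map_mul, LinearMap.add_apply, LinearMap.sum_apply, Pi.add_apply,
    Finset.sum_apply, Module.End.mul_apply, hz, map_zero, Pi.zero_apply, add_zero,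
    map_natCast, aeval_C, Module.algebraMap_end_apply, Module.End.natCast_apply, Pi.smul_apply,
    smul_eq_mul, nsmul_eq_mul, Pi.mul_apply, Pi.natCast_apply]

lemma sh_aeval' {R M : Type*} [CommRing R] [AddCommGroup M] [Module R M] (P : R[X]) (u : ℕ → M)
    (n N : ℕ) (hN : P.natDegree < N) :
    aeval (sh R M) P u n = ∑ i ∈ Finset.range N, P.coeff i • u (n + i) := by
  rw [aeval_eq_sum_range' hN, LinearMap.sum_apply, Finset.sum_apply]
  simp [sh_pow]

lemma sh_map {A B M N : Type*} [CommRing A] [CommRing B] [AddCommGroup M] [AddCommGroup N]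
    [Module A M] [Module B N] (f : A →+* B) (φ : M →+ N) (hφ : ∀ a m, φ (a • m) = f a • φ m)
    (Q : A[X]) (y : ℕ → M) (n : ℕ) :
    aeval (sh B N) (Q.map f) (fun n => φ (y n)) n = φ (aeval (sh A M) Q y n) := by
  rw [sh_aeval Q, sh_aeval' _ _ _ (Q.natDegree + 1) (Nat.lt_succ_of_le natDegree_map_le), map_sum]
  simp [hφ]

/-- The case of sequences in a polynomial ring over the integers. -/
lemma mv_case {ι A : Type*} [CommRing A] (e : A ≃+* MvPolynomial ι ℤ) (Q : A[X]) (hQ : Q.Monic)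
    (h0 : Q.coeff 0 ≠ 0) :
    ∃ r, 1 ≤ r ∧ ∀ y : ℕ → A, aeval (sh A A) Q y = 0 → ∀ j,
      {n | y (r * n + j) = 0}.Infinite → ∀ n, y (r * n + j) = 0 := by
  let ev : (ι → ℤ) → A →+* ℤ := fun σ => (MvPolynomial.eval σ).comp e.toRingHom
  have hev : ∀ σ a, ev σ a = MvPolynomial.eval σ (e a) := fun _ _ => rfl
  obtain ⟨τ, hτ⟩ : ∃ τ, ev τ (Q.coeff 0) ≠ 0 := by
    by_contra! hcon
    apply h0
    apply e.injective
    rw [map_zero]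
    apply MvPolynomial.funext
    intro x
    rw [← hev, hcon, map_zero]
  obtain ⟨p, hpl, hp⟩ := Nat.exists_infinite_primes ((ev τ (Q.coeff 0)).natAbs + 3)
  have : Fact p.Prime := ⟨hp⟩
  have hpd : ((ev τ (Q.coeff 0) : ℤ) : ZMod p) ≠ 0 := by
    rw [Ne, ZMod.intCast_zmod_eq_zero_iff_dvd]
    intro hd
    have := Nat.le_of_dvd (Int.natAbs_pos.mpr hτ) (Int.natCast_dvd.mp hd)
    omega
  obtain ⟨r, hr, hdvd⟩ := exists_order ((Q.map (ev τ)).map (Int.castRingHom (ZMod p)))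
    ((hQ.map _).map _) (by simpa using hpd)
  refine ⟨r, hr, fun y hy j hinf n => ?_⟩
  apply e.injective
  rw [map_zero]
  refine MvPolynomial.funext_set (fun i => Set.range fun k : ℤ => τ i + p * k) ?_ ?_
  · intro i
    apply Set.infinite_range_of_injective
    intro a b hab
    simpa [hp.ne_zero] using hab
  · intro x hx
    rw [map_zero, ← hev]
    have hcong : ∀ a, ((ev x a : ℤ) : ZMod p) = ((ev τ a : ℤ) : ZMod p) := by
      intro a
      rw [hev, hev, ← eq_intCast (Int.castRingHom (ZMod p)), ← eq_intCast (Int.castRingHom (ZMod p)),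
        ← MvPolynomial.eval₂_id, ← MvPolynomial.eval₂_id (g := τ), MvPolynomial.hom_eval₂,
        MvPolynomial.hom_eval₂]
      congr 1
      funext i
      obtain ⟨k, hk⟩ := hx i (Set.mem_univ _)
      simp [← hk]
    have hmap : (Q.map (ev x)).map (Int.castRingHom (ZMod p))
        = (Q.map (ev τ)).map (Int.castRingHom (ZMod p)) := by
      ext i
      simp [coeff_map, hcong]
    refine int_case (p := p) (by omega) (Q.map (ev x)) r (by rw [hmap]; exact hdvd) (fun n => ev x (y n)) ?_ j ?_ n
    · funext m
      have := sh_map (M := A) (N := ℤ) (ev x) (ev x : A →+ ℤ) (by intro a m; simp) Q y m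
      rw [hy] at this
      simpa using this
    · refine hinf.mono fun m hm => ?_
      have hm' : y (r * m + j) = 0 := hm
      simp [hm']

/-- Sequences in a field containing a polynomial ring over the integers. -/
lemma field_case {ι A K : Type*} [CommRing A] [IsDomain A] [Field K] [Algebra A K] [FaithfulSMul A K]
    (e : A ≃+* MvPolynomial ι ℤ) (Q : A[X]) (hQ : Q.Monic)
    (h0 : Q.coeff 0 ≠ 0) (b : ℕ → K) (hb : aeval (sh A K) Q b = 0) :
    ∃ r, 1 ≤ r ∧ ∀ j, {n | b (r * n + j) = 0}.Infinite → ∀ n, b (r * n + j) = 0 := by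
  obtain ⟨r, hr, H⟩ := mv_case e Q hQ h0
  refine ⟨r, hr, fun j hinf n => ?_⟩
  let _ : Algebra (FractionRing A) K := FractionRing.liftAlgebra A K
  rw [← Module.forall_dual_apply_eq_zero_iff (FractionRing A)]
  intro l
  obtain ⟨δ, hδ⟩ := IsLocalization.exist_integer_multiples (nonZeroDivisors A)
    (Finset.range Q.natDegree) (fun i => l (b i))
  let φ : K →ₗ[A] FractionRing A := (δ : A) • (l.restrictScalars A)
  have hφ : ∀ x, φ x = (δ : A) • l x := fun _ => rfl
  have hrec : ∀ m, ∑ i ∈ Finset.range (Q.natDegree + 1), Q.coeff i • φ (b (m + i)) = 0 := by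
    intro m
    have := congrArg φ (congrFun hb m)
    rw [sh_aeval, map_sum] at this
    simpa using this
  have hint : ∀ m, ∃ a : A, algebraMap A (FractionRing A) a = φ (b m) := by
    intro m
    induction m using Nat.strong_induction_on with
    | _ m ih =>
      by_cases hm : m < Q.natDegree
      · exact hδ m (by simpa using hm)
      · obtain ⟨t, rfl⟩ : ∃ t, m = t + Q.natDegree := ⟨m - Q.natDegree, by omega⟩
        have h1 := hrec t
        rw [Finset.sum_range_succ, hQ.coeff_natDegree, one_smul] at h1
        rw [eq_neg_of_add_eq_zero_right h1]
        change _ ∈ (algebraMap A (FractionRing A)).range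
        refine neg_mem (sum_mem fun i hi => ?_)
        rw [Algebra.smul_def]
        exact mul_mem ⟨_, rfl⟩ (ih (t + i) (by have := Finset.mem_range.mp hi; omega))
  choose y hy using hint
  have hinj := IsFractionRing.injective A (FractionRing A)
  have hyz : ∀ m, b m = 0 → y m = 0 := by
    intro m hm
    apply hinj
    rw [hy, hm, map_zero, map_zero]
  have hyr : aeval (sh A A) Q y = 0 := by
    funext m
    apply hinj
    rw [sh_aeval, map_sum, Pi.zero_apply, map_zero, ← hrec m]
    refine Finset.sum_congr rfl fun i _ => ?_
    rw [← hy, smul_eq_mul, map_mul, Algebra.smul_def]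
  have h1 := H y hyr j (hinf.mono fun m hm => hyz _ hm) n
  have h2 := hy (r * n + j)
  rw [h1, map_zero, hφ, Algebra.smul_def] at h2
  rcases mul_eq_zero.mp h2.symm with h3 | h3
  · exact absurd h3 (by
      rw [map_eq_zero_iff _ hinj]
      exact nonZeroDivisors.coe_ne_zero δ)
  · exact h3

lemma periodic_of_classes {K : Type*} [Field K] (b : ℕ → K) (r : ℕ) (hr : 1 ≤ r)
    (H : ∀ j, {n | b (r * n + j) = 0}.Infinite → ∀ n, b (r * n + j) = 0) :
    ∃ N, ∀ n, N ≤ n → (b (n + r) = 0 ↔ b n = 0) := by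
  have hj : ∀ j, ∃ N, ∀ n, N ≤ n → (b (r * (n + 1) + j) = 0 ↔ b (r * n + j) = 0) := by
    intro j
    by_cases hinf : {n | b (r * n + j) = 0}.Infinite
    · exact ⟨0, fun n _ => by simp [H j hinf]⟩
    · rw [Set.not_infinite] at hinf
      obtain ⟨N, hN⟩ := hinf.bddAbove
      refine ⟨N + 1, fun n hn => ?_⟩
      have h1 : ∀ m, N < m → b (r * m + j) ≠ 0 := fun m hm h => absurd (hN h) (by omega)
      simp [h1 n (by omega), h1 (n + 1) (by omega)]
  choose N hN using hj
  refine ⟨r * ((Finset.range r).sup N + 1), fun n hn => ?_⟩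
  have h1 : n % r < r := Nat.mod_lt _ (by omega)
  have h2 : N (n % r) ≤ (Finset.range r).sup N := Finset.le_sup (Finset.mem_range.mpr h1)
  have h3 : (Finset.range r).sup N + 1 ≤ n / r := by
    rw [Nat.le_div_iff_mul_le (by omega), mul_comm]; exact hn
  have h4 := hN (n % r) (n / r) (by omega)
  have h5 := Nat.div_add_mod n r
  rw [show r * (n / r + 1) + n % r = n + r by rw [mul_add]; omega, h5] at h4
  exact h4

lemma root_algebraic {A K : Type*} [CommRing A] [IsDomain A] [Field K] [Algebra A K]
    [FaithfulSMul A K] [halg : Algebra.IsAlgebraic A K] (χ : K[X]) (hχ : χ.Monic) :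
    IsAlgebraic A (AdjoinRoot.root χ) := by
  let _ : Algebra (FractionRing A) K := FractionRing.liftAlgebra A K
  have halgL : Algebra.IsAlgebraic (FractionRing A) K :=
    (IsFractionRing.comap_isAlgebraic_iff (A := A) (K := FractionRing A) (C := K)).mp halg
  have h1 : IsIntegral K (AdjoinRoot.root χ) := AdjoinRoot.isIntegral_root' hχ
  have h2 : IsIntegral (FractionRing A) (AdjoinRoot.root χ) := by
    have : Algebra.IsIntegral (FractionRing A) K := Algebra.isAlgebraic_iff_isIntegral.mp halgL
    exact isIntegral_trans (A := K) _ h1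
  have : IsScalarTower A (FractionRing A) K := FractionRing.isScalarTower_liftAlgebra A K
  have : IsScalarTower A (FractionRing A) (AdjoinRoot χ) := by
    refine IsScalarTower.of_algebraMap_eq fun x => ?_
    rw [IsScalarTower.algebraMap_apply A K (AdjoinRoot χ),
      IsScalarTower.algebraMap_apply (FractionRing A) K (AdjoinRoot χ),
      ← IsScalarTower.algebraMap_apply A (FractionRing A) K]
  exact (IsFractionRing.isAlgebraic_iff A (FractionRing A) _).mpr h2.isAlgebraic

/-- Skolem-Mahler-Lech for a sequence annihilated by a monic polynomial in the shift. -/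
lemma skolem {K : Type*} [Field K] [CharZero K] (χ : K[X]) (hχ : χ.Monic) (a : ℕ → K)
    (ha : aeval (sh K K) χ a = 0) :
    ∃ N T, 1 ≤ T ∧ ∀ n, N ≤ n → (a (n + T) = 0 ↔ a n = 0) := by
  obtain ⟨s, hs⟩ := exists_isTranscendenceBasis ℤ K
  let A := Algebra.adjoin ℤ (Set.range ((↑) : s → K))
  have halg : Algebra.IsAlgebraic A K := hs.isAlgebraic
  let e : A ≃+* MvPolynomial s ℤ := hs.1.aevalEquiv.symm.toRingEquiv
  have hroot : IsAlgebraic A (AdjoinRoot.root χ) := root_algebraic χ hχ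
  obtain ⟨c, hc, P, hP, hPe⟩ := hroot.exists_integral_multiple
  have hcK : algebraMap A K c ≠ 0 := by
    rwa [Ne, map_eq_zero_iff _ (FaithfulSMul.algebraMap_injective A K)]
  -- the rescaled sequence
  let b : ℕ → K := fun n => (algebraMap A K c) ^ n * a n
  have hbP : aeval (sh A K) P b = 0 := by
    have hdiv : χ ∣ (P.map (algebraMap A K)).comp (C (algebraMap A K c) * X) := by
      rw [← AdjoinRoot.mk_eq_zero, ← AdjoinRoot.aeval_eq, aeval_comp]
      simp only [map_mul, aeval_X, aeval_C]
      rw [aeval_map_algebraMap, ← hPe, aeval_def]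
      congr 1
      rw [Algebra.smul_def, ← IsScalarTower.algebraMap_apply]
    obtain ⟨G, hG⟩ := hdiv
    have h1 : aeval (sh K K) ((P.map (algebraMap A K)).comp (C (algebraMap A K c) * X)) a = 0 := by
      rw [hG, mul_comm, map_mul, Module.End.mul_apply, ha, map_zero]
    funext n
    have h2 := congrFun h1 n
    rw [aeval_comp, map_mul, aeval_C, aeval_X, aeval_map_algebraMap, aeval_eq_sum_range] at h2
    rw [sh_aeval, Pi.zero_apply]
    have h3 : ∀ i, ((algebraMap K (Module.End K (ℕ → K)) (algebraMap A K c) * sh K K) ^ i) a n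
        = (algebraMap A K c) ^ i * a (n + i) := by
      intro i
      rw [Commute.mul_pow (Algebra.commutes _ _), ← map_pow, Module.End.mul_apply,
        Module.algebraMap_end_apply, Pi.smul_apply, sh_pow, smul_eq_mul]
    rw [LinearMap.sum_apply, Finset.sum_apply] at h2
    simp only [LinearMap.smul_apply, Pi.smul_apply, h3] at h2
    have h4 := congrArg (fun t => (algebraMap A K c) ^ n * t) h2
    simp only [Finset.mul_sum, Pi.zero_apply, mul_zero] at h4
    rw [← h4]
    refine Finset.sum_congr rfl fun i _ => ?_
    simp only [b, Algebra.smul_def]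
    ring
  obtain ⟨Q, hQ, hQ0⟩ := P.exists_eq_pow_rootMultiplicity_mul_and_not_dvd hP.ne_zero 0
  generalize rootMultiplicity 0 P = t at hQ
  rw [C_0, sub_zero] at hQ hQ0
  rw [X_dvd_iff] at hQ0
  have hQm : Q.Monic := by
    rw [hQ] at hP
    exact (monic_X_pow t).of_mul_monic_left hP
  have hbQ : aeval (sh A K) Q (fun n => b (n + t)) = 0 := by
    have h1 : (fun n => b (n + t)) = aeval (sh A K) (X ^ t : A[X]) b := by
      funext n
      rw [map_pow, aeval_X, sh_pow]
    rw [h1, ← Module.End.mul_apply, ← map_mul, mul_comm, ← hQ, hbP]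
  obtain ⟨r, hr, H⟩ := field_case e Q hQm hQ0 _ hbQ
  obtain ⟨N, hN⟩ := periodic_of_classes (fun n => b (n + t)) r hr H
  have hab : ∀ n, b n = 0 ↔ a n = 0 := fun n => by
    have h := pow_ne_zero n hcK
    simp only [b, mul_eq_zero, h, false_or]
  refine ⟨N + t, r, hr, fun n hn => ?_⟩
  have h1 := hN (n - t) (by omega)
  simp only [hab] at h1
  rwa [show n - t + r + t = n + r by omega, show n - t + t = n by omega] at h1

end SML

theorem zero_indicator_eventually_periodic {K : Type*} [Field K] [CharZero K]
    (d : ℕ) (hd : 1 ≤ d) (γ : Fin d → K) (a : ℕ → K)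
    (hrec : ∀ n : ℕ, a (n + d) = ∑ j : Fin d, γ j * a (n + d - 1 - j))
    (c : ℕ → ℕ) (hc : ∀ n, c n = if a n = 0 then 1 else 0) :
    ∃ N T : ℕ, 1 ≤ T ∧ ∀ n, N ≤ n → c (n + T) = c n := by
  let S : Polynomial K := ∑ j : Fin d, Polynomial.C (γ j) * Polynomial.X ^ (d - 1 - (j : ℕ))
  have hS : S.degree < d := by
    refine (Polynomial.degree_sum_le _ _).trans_lt ?_
    refine (Finset.sup_lt_iff (WithBot.bot_lt_coe d)).mpr ?_
    intro j _
    refine (Polynomial.degree_C_mul_X_pow_le _ _).trans_lt ?_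
    exact Nat.cast_lt.mpr (by omega : d - 1 - (j : ℕ) < d)
  have hmon : (Polynomial.X ^ d - S).Monic := Polynomial.monic_X_pow_sub hS
  obtain ⟨N, T, hT, h⟩ := SML.skolem (Polynomial.X ^ d - S) hmon a (by
    funext n
    rw [map_sub, map_pow, Polynomial.aeval_X, LinearMap.sub_apply, Pi.sub_apply, SML.sh_pow, hrec]
    simp only [S, map_sum, map_mul, map_pow, Polynomial.aeval_X, Polynomial.aeval_C,
      LinearMap.sum_apply, Finset.sum_apply, Module.End.mul_apply, Module.algebraMap_end_apply,
      Pi.smul_apply, SML.sh_pow, smul_eq_mul, Pi.zero_apply]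
    rw [sub_eq_zero]
    refine Finset.sum_congr rfl fun j _ => ?_
    rw [show n + d - 1 - (j : ℕ) = n + (d - 1 - (j : ℕ)) by omega])
  refine ⟨N, T, hT, fun n hn => ?_⟩
  rw [hc, hc]
  simp only [h n hn]
end
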